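/- Suppose the initial datum Q_init satisfies Assumption (A2). Then there exists a unique classical solution (Q, Ñ) of the relaxed system, and it is global in time, i.e. it exists on the whole time interval [0,∞). -/

import Mathlib

open Real Set MeasureTheory Filter Topology
open scoped ENNReal

noncomputable section

/-- The time interval `[0, T)` in `ℝ`, where `T : ℝ≥0∞` may be `∞`. -/
def Ico0 (T : ℝ≥0∞) : Set ℝ := {τ : ℝ | 0 ≤ τ ∧ ENNReal.ofReal τ < T}

/-- Partial derivative in the time variable (one-sided at `τ = 0`). -/
def pdTau (Q : ℝ → ℝ → ℝ) (τ η : ℝ) : ℝ := derivWithin (fun s => Q s η) (Ici 0) τ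

/-- Partial derivative in the spatial variable (one-sided at `η = 0` and `η = 1`). -/
def pdEta (Q : ℝ → ℝ → ℝ) (τ η : ℝ) : ℝ := derivWithin (fun x => Q τ x) (Icc 0 1) η

/-- Assumption 1.1: `K ∈ C²(ℝ)` with `K'`, `K''` bounded on `ℝ` and `K > 0` on `[0, Φ_F]`. -/
structure KAssump (K : ℝ → ℝ) (ΦF : ℝ) : Prop where
  smooth : ContDiff ℝ 2 K
  bdd1 : ∃ C : ℝ, ∀ x : ℝ, |deriv K x| ≤ C
  bdd2 : ∃ C : ℝ, ∀ x : ℝ, |deriv (deriv K) x| ≤ C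
  pos : ∀ φ ∈ Icc (0 : ℝ) ΦF, 0 < K φ

/-- `k_min := K'(0) + ∫₀^{Φ_F} min(K''(φ), 0) dφ`. -/
def kmin (K : ℝ → ℝ) (ΦF : ℝ) : ℝ :=
  deriv K 0 + ∫ φ in (0 : ℝ)..ΦF, min (deriv (deriv K) φ) 0

/-- `k_max := K'(0) + ∫₀^{Φ_F} max(K''(φ), 0) dφ`. -/
def kmax (K : ℝ → ℝ) (ΦF : ℝ) : ℝ :=
  deriv K 0 + ∫ φ in (0 : ℝ)..ΦF, max (deriv (deriv K) φ) 0

/-- Assumption (A2) on the initial datum. -/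
structure A2 (K : ℝ → ℝ) (ΦF : ℝ) (Qinit : ℝ → ℝ) : Prop where
  reg : ContDiffOn ℝ 1 Qinit (Icc 0 1)
  mono : MonotoneOn Qinit (Icc 0 1)
  init0 : Qinit 0 = 0
  init1 : Qinit 1 = ΦF
  deriv1 : K ΦF < derivWithin Qinit (Icc 0 1) 1
  compat : derivWithin Qinit (Icc 0 1) 1 - derivWithin Qinit (Icc 0 1) 0 = K ΦF - K 0

/-- A classical solution `(Q, N)` of the Q-system on `[0, T)` with initial datum `Qinit`. -/
structure IsQSol (K : ℝ → ℝ) (ΦF : ℝ) (T : ℝ≥0∞) (Qinit : ℝ → ℝ)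
    (Q : ℝ → ℝ → ℝ) (N : ℝ → ℝ) : Prop where
  initReg : ContDiffOn ℝ 1 Qinit (Icc 0 1)
  initMono : MonotoneOn Qinit (Icc 0 1)
  init0 : Qinit 0 = 0
  init1 : Qinit 1 = ΦF
  initDeriv : K ΦF < derivWithin Qinit (Icc 0 1) 1
  reg : ContDiffOn ℝ 1 (Function.uncurry Q) (Ico0 T ×ˢ Icc (0 : ℝ) 1)
  mono : ∀ τ ∈ Ico0 T, MonotoneOn (Q τ) (Icc 0 1)
  Ncont : ContinuousOn N (Ico0 T)
  Npos : ∀ τ ∈ Ico0 T, 0 < N τ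
  pde : ∀ τ ∈ Ico0 T, ∀ η ∈ Ioo (0 : ℝ) 1,
    pdTau Q τ η + pdEta Q τ η = 1 / N τ + K (Q τ η)
  bc : ∀ τ ∈ Ico0 T, Q τ 0 = 0
  Ndef : ∀ τ ∈ Ico0 T, 1 / N τ = pdEta Q τ 1 - K ΦF
  init : ∀ η ∈ Icc (0 : ℝ) 1, Q 0 η = Qinit η
  constraint : ∀ τ ∈ Ico0 T, K ΦF < pdEta Q τ 1

/-- A classical solution `(Q, Ñ)` of the relaxed system on `[0, T)` with initial datum `Qinit`,
where `Ñ` is unconstrained in sign. -/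
structure IsRelaxedSol (K : ℝ → ℝ) (ΦF : ℝ) (T : ℝ≥0∞) (Qinit : ℝ → ℝ)
    (Q : ℝ → ℝ → ℝ) (Ntil : ℝ → ℝ) : Prop where
  initReg : ContDiffOn ℝ 1 Qinit (Icc 0 1)
  init0 : Qinit 0 = 0
  init1 : Qinit 1 = ΦF
  reg : ContDiffOn ℝ 1 (Function.uncurry Q) (Ico0 T ×ˢ Icc (0 : ℝ) 1)
  Ncont : ContinuousOn Ntil (Ico0 T)
  pde : ∀ τ ∈ Ico0 T, ∀ η ∈ Ioo (0 : ℝ) 1,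
    pdTau Q τ η + pdEta Q τ η = Ntil τ + K (Q τ η)
  bc : ∀ τ ∈ Ico0 T, Q τ 0 = 0
  Ndef : ∀ τ ∈ Ico0 T, Ntil τ = pdEta Q τ 1 - K ΦF
  init : ∀ η ∈ Icc (0 : ℝ) 1, Q 0 η = Qinit η

/-- A steady state `(Q*, N*)` of the Q-system. -/
def IsSteadyState (K : ℝ → ℝ) (ΦF : ℝ) (Qs : ℝ → ℝ) (Ns : ℝ) : Prop :=
  ContDiffOn ℝ 1 Qs (Icc 0 1) ∧ 0 < Ns ∧
    (∀ η ∈ Icc (0 : ℝ) 1, derivWithin Qs (Icc 0 1) η = K (Qs η) + 1 / Ns) ∧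
    Qs 0 = 0 ∧ Qs 1 = ΦF

/-- `P₀ f := f - ∫₀¹ f`. -/
def P0 (f : ℝ → ℝ) (η : ℝ) : ℝ := f η - ∫ x in (0 : ℝ)..1, f x

/-- `H_init := Q_init' - K ∘ Q_init` (derivative within `[0,1]`). -/
def Hinit (K : ℝ → ℝ) (Qinit : ℝ → ℝ) (η : ℝ) : ℝ :=
  derivWithin Qinit (Icc 0 1) η - K (Qinit η)

/-!
The slope `R = ∂_η Q` eliminates `Ñ`: it solves `∂_τ R + ∂_η R = K'(∫₀^η R) R` with the boundary
condition `R(τ, 0) = R(τ, 1) - (K(Φ_F) - K(0))`. Integrating along the characteristics `τ - η = c`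
turns this into a fixed-point equation. The fixed-point map preserves an exponentially growing bound
on `R`, and it contracts a weighted supremum norm on the whole half-strip `τ ≥ 0`, `0 ≤ η ≤ 1`, so
that the solution is global at once.

For uniqueness, `Q(·, 1)` solves `q' = K(q) - K(Φ_F)`, hence is constantly `Φ_F`. The
characteristics that end at `η = 1` therefore control `∫ Ñ` by `Q`, and those that end at `η < 1`
then show that two solutions which agree at time `a` agree for a further time depending only on the
Lipschitz constant of `K`.
-/

/-! ### Functions of one and two real variables -/

section General

variable {X : Type*} [TopologicalSpace X]

theorem exists_continuous_fixedPoint_of_weighted_contraction {ω β : X → ℝ} {B : ℝ} {θ : NNReal}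
    {Γ : (X → ℝ) → X → ℝ} (hω : Continuous ω) (hω_pos : ∀ x, 0 < ω x) (hβ : ∀ x, 0 ≤ β x)
    (hβω : ∀ x, β x ≤ B * ω x) (hθ : θ < 1)
    (hΓ_cont : ∀ f, Continuous f → Continuous (Γ f))
    (hΓ_bound : ∀ f, Continuous f → (∀ x, |f x| ≤ β x) → ∀ x, |Γ f x| ≤ β x)
    (hΓ_contr : ∀ f g, Continuous f → Continuous g → (∀ x, |f x| ≤ β x) → (∀ x, |g x| ≤ β x) →
      ∀ C, (∀ x, |f x - g x| ≤ C * ω x) → ∀ x, |Γ f x - Γ g x| ≤ θ * C * ω x) :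
    ∃ f, Continuous f ∧ Γ f = f := by
  let S : Set (BoundedContinuousFunction X ℝ) := {u | ∀ x, |ω x * u x| ≤ β x}
  have hS_closed : IsClosed S := by
    simp only [S, ofPred_forall]
    refine isClosed_iInter fun x => isClosed_le ?_ continuous_const
    exact (continuous_const.mul (continuous_eval_const x)).abs
  have : CompleteSpace S := hS_closed.completeSpace_coe
  have : Nonempty S := ⟨⟨0, fun x => by simpa using hβ x⟩⟩
  have weighted_cont (u : S) : Continuous fun x => ω x * u.1 x := hω.mul u.1.continuous
  have image_bound (u : S) (x : X) : |Γ (fun y => ω y * u.1 y) x| ≤ β x :=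
    hΓ_bound _ (weighted_cont u) u.2 x
  let Ψ : S → S := fun u =>
    ⟨.ofNormedAddCommGroup (fun x => Γ (fun y => ω y * u.1 y) x / ω x)
        ((hΓ_cont _ (weighted_cont u)).div hω fun x => (hω_pos x).ne') B fun x => by
          rw [norm_div, norm_eq_abs, norm_of_nonneg (hω_pos x).le, div_le_iff₀ (hω_pos x)]
          exact (image_bound u x).trans (hβω x),
      fun x => by
        simpa [mul_div_cancel₀ _ (hω_pos x).ne'] using image_bound u x⟩
  have hΨ : ContractingWith θ Ψ := by
    refine ⟨hθ, LipschitzWith.of_dist_le_mul fun u v => ?_⟩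
    refine (BoundedContinuousFunction.dist_le (by positivity)).2 fun x => ?_
    have weighted_dist (y : X) : |ω y * u.1 y - ω y * v.1 y| ≤ dist u v * ω y := by
      rw [← mul_sub, abs_mul, abs_of_pos (hω_pos y), mul_comm]
      exact mul_le_mul_of_nonneg_right (BoundedContinuousFunction.dist_coe_le_dist (f := u.1) y)
        (hω_pos y).le
    change |Γ _ x / ω x - Γ _ x / ω x| ≤ _
    rw [← sub_div, abs_div, abs_of_pos (hω_pos x), div_le_iff₀ (hω_pos x)]
    exact hΓ_contr _ _ (weighted_cont u) (weighted_cont v) u.2 v.2 _ weighted_dist x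
  let u := hΨ.fixedPoint
  refine ⟨fun x => ω x * u.1 x, weighted_cont u, funext fun x => ?_⟩
  have hu : Γ (fun y => ω y * u.1 y) x / ω x = u.1 x :=
    congrArg (fun v : S => v.1 x) hΨ.fixedPoint_isFixedPt
  rw [← hu, mul_div_cancel₀ _ (hω_pos x).ne']

theorem continuous_intervalIntegral_of_continuous {F : X → ℝ → ℝ} {a b : X → ℝ}
    (hF : Continuous (Function.uncurry F)) (ha : Continuous a) (hb : Continuous b) :
    Continuous fun x => ∫ r in a x..b x, F x r := by
  have hF_int (x : X) (p q : ℝ) : IntervalIntegrable (F x) volume p q :=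
    (hF.comp (Continuous.prodMk_right x)).intervalIntegrable p q
  have hsplit (x : X) :
      ∫ r in a x..b x, F x r = (∫ r in (0 : ℝ)..b x, F x r) - ∫ r in (0 : ℝ)..a x, F x r :=
    (intervalIntegral.integral_interval_sub_left (hF_int x 0 _) (hF_int x 0 _)).symm
  simp_rw [hsplit]
  exact (intervalIntegral.continuous_parametric_intervalIntegral_of_continuous hF hb).sub
    (intervalIntegral.continuous_parametric_intervalIntegral_of_continuous hF ha)

theorem hasDerivAt_intervalIntegral_of_continuous_deriv {f f' : ℝ → ℝ → ℝ}
    (hf : ∀ s c, HasDerivAt (fun s => f s c) (f' s c) s) (hf_cont : ∀ s, Continuous (f s))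
    (hf'_cont : Continuous (Function.uncurry f')) (a b s : ℝ) :
    HasDerivAt (fun s => ∫ c in a..b, f s c) (∫ c in a..b, f' s c) s := by
  obtain ⟨M, hM⟩ := (isCompact_Icc.prod isCompact_uIcc).exists_bound_of_continuousOn
    (s := Icc (s - 1) (s + 1) ×ˢ uIcc a b) hf'_cont.continuousOn
  refine (intervalIntegral.hasDerivAt_integral_of_dominated_loc_of_deriv_le (bound := fun _ => M)
    (Icc_mem_nhds (sub_one_lt s) (lt_add_one s))
    (.of_forall fun t => (hf_cont t).aestronglyMeasurable) ((hf_cont s).intervalIntegrable a b)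
    (hf'_cont.uncurry_left s).aestronglyMeasurable
    (.of_forall fun c hc t ht => hM (t, c) ⟨ht, uIoc_subset_uIcc hc⟩) intervalIntegrable_const
    (.of_forall fun c _ t _ => hf t c)).2

theorem continuous_toSpanSingleton_uncurry {g : ℝ → ℝ → ℝ} (hg : Continuous (Function.uncurry g)) :
    Continuous fun p : ℝ × ℝ => ContinuousLinearMap.toSpanSingleton ℝ (g p.1 p.2) :=
  ContinuousLinearMap.toSpanSingletonCLE.continuous.comp hg

theorem hasFDerivAt_uncurry_of_hasDerivAt {f f₁ f₂ : ℝ → ℝ → ℝ}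
    (hf₁ : ∀ s c, HasDerivAt (fun s => f s c) (f₁ s c) s)
    (hf₂ : ∀ s c, HasDerivAt (f s) (f₂ s c) c)
    (hf₁_cont : Continuous (Function.uncurry f₁)) (hf₂_cont : Continuous (Function.uncurry f₂))
    (p : ℝ × ℝ) :
    HasFDerivAt (Function.uncurry f) ((ContinuousLinearMap.toSpanSingleton ℝ (f₁ p.1 p.2)).coprod
      (ContinuousLinearMap.toSpanSingleton ℝ (f₂ p.1 p.2))) p :=
  (hasStrictFDerivAt_uncurry_coprod (𝕜 := ℝ)
    (f₁ := fun s c => .toSpanSingleton ℝ (f₁ s c)) (f₂ := fun s c => .toSpanSingleton ℝ (f₂ s c))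
    (.of_forall fun v => (hf₁ v.1 v.2).hasFDerivAt)
    (.of_forall fun v => (hf₂ v.1 v.2).hasFDerivAt)
    (continuous_toSpanSingleton_uncurry hf₁_cont).continuousAt
    (continuous_toSpanSingleton_uncurry hf₂_cont).continuousAt).hasFDerivAt

theorem contDiff_one_uncurry_of_hasDerivAt {f f₁ f₂ : ℝ → ℝ → ℝ}
    (hf₁ : ∀ s c, HasDerivAt (fun s => f s c) (f₁ s c) s)
    (hf₂ : ∀ s c, HasDerivAt (f s) (f₂ s c) c)
    (hf₁_cont : Continuous (Function.uncurry f₁)) (hf₂_cont : Continuous (Function.uncurry f₂)) :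
    ContDiff ℝ 1 (Function.uncurry f) :=
  contDiff_one_iff_hasFDerivAt.2 ⟨_,
    (ContinuousLinearMap.coprodEquivL ℝ (𝕜 := ℝ) (E := ℝ) (F := ℝ) (G := ℝ)).continuous.comp
      ((continuous_toSpanSingleton_uncurry hf₁_cont).prodMk
        (continuous_toSpanSingleton_uncurry hf₂_cont)),
    hasFDerivAt_uncurry_of_hasDerivAt hf₁ hf₂ hf₁_cont hf₂_cont⟩

theorem hasDerivAt_intervalIntegral_of_moving_right {f f' : ℝ → ℝ → ℝ}
    (hf : ∀ s c, HasDerivAt (fun s => f s c) (f' s c) s)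
    (hf_cont : Continuous (Function.uncurry f)) (hf'_cont : Continuous (Function.uncurry f'))
    {v : ℝ → ℝ} {v' s : ℝ} (hv : HasDerivAt v v' s) (a : ℝ) :
    HasDerivAt (fun s => ∫ c in a..v s, f s c)
      ((∫ c in a..v s, f' s c) + v' * f s (v s)) s := by
  have hprimitive := hasFDerivAt_uncurry_of_hasDerivAt
    (fun s x => hasDerivAt_intervalIntegral_of_continuous_deriv hf
      (fun s => hf_cont.uncurry_left s) hf'_cont a x s)
    (fun s x => ((hf_cont.uncurry_left s).integral_hasStrictDerivAt a x).hasDerivAt)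
    (continuous_intervalIntegral_of_continuous (X := ℝ × ℝ) (F := fun p c => f' p.1 c)
      (by fun_prop) continuous_const continuous_snd) hf_cont (s, v s)
  simpa [Function.comp_def] using hprimitive.comp_hasDerivAt s ((hasDerivAt_id s).prodMk hv)

theorem hasDerivAt_intervalIntegral_of_moving_endpoints {f f' : ℝ → ℝ → ℝ}
    (hf : ∀ s c, HasDerivAt (fun s => f s c) (f' s c) s)
    (hf_cont : Continuous (Function.uncurry f)) (hf'_cont : Continuous (Function.uncurry f'))
    {u v : ℝ → ℝ} {u' v' s : ℝ} (hu : HasDerivAt u u' s) (hv : HasDerivAt v v' s) :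
    HasDerivAt (fun s => ∫ c in u s..v s, f s c)
      ((∫ c in u s..v s, f' s c) + v' * f s (v s) - u' * f s (u s)) s := by
  have hsplit {g : ℝ → ℝ → ℝ} (hg : Continuous (Function.uncurry g)) (s : ℝ) :
      ∫ c in u s..v s, g s c = (∫ c in (0 : ℝ)..v s, g s c) - ∫ c in (0 : ℝ)..u s, g s c :=
    (intervalIntegral.integral_interval_sub_left
      ((hg.uncurry_left s).intervalIntegrable _ _)
      ((hg.uncurry_left s).intervalIntegrable _ _)).symm
  simp_rw [hsplit hf_cont, hsplit hf'_cont]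
  refine ((hasDerivAt_intervalIntegral_of_moving_right hf hf_cont hf'_cont hv 0).sub
    (hasDerivAt_intervalIntegral_of_moving_right hf hf_cont hf'_cont hu 0)).congr_deriv ?_
  ring

theorem abs_exp_sub_exp_le {a b M : ℝ} (ha : a ≤ M) (hb : b ≤ M) :
    |exp a - exp b| ≤ exp M * |a - b| := by
  have hderiv : ∀ x ∈ Iic M, ‖exp x‖ ≤ exp M := fun x hx => by
    rw [norm_of_nonneg (exp_pos x).le]
    exact exp_le_exp.2 hx
  exact (convex_Iic M).norm_image_sub_le_of_norm_hasDerivWithin_le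
    (fun x _ => (hasDerivAt_exp x).hasDerivWithinAt) hderiv hb ha

theorem abs_intervalIntegral_le_of_abs_le_deriv {h W W' : ℝ → ℝ} {a b : ℝ} (hab : a ≤ b)
    (hW : ∀ r, HasDerivAt W (W' r) r) (hW' : Continuous W') (hWa : 0 ≤ W a)
    (hh : ∀ r ∈ Ioc a b, |h r| ≤ W' r) : |∫ r in a..b, h r| ≤ W b := by
  calc |∫ r in a..b, h r|
      ≤ ∫ r in a..b, W' r := intervalIntegral.norm_integral_le_of_norm_le (f := h) hab
        (.of_forall hh) (hW'.intervalIntegrable a b)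
    _ = W b - W a := intervalIntegral.integral_eq_sub_of_hasDerivAt (fun r _ => hW r)
        (hW'.intervalIntegrable a b)
    _ ≤ W b := sub_le_self _ hWa

theorem exists_lipschitzWith_of_abs_deriv_le {f : ℝ → ℝ} (hf : Differentiable ℝ f)
    (hf' : ∃ C, ∀ x, |deriv f x| ≤ C) : ∃ L : NNReal, LipschitzWith L f :=
  let ⟨C, hC⟩ := hf'
  ⟨⟨C, (abs_nonneg _).trans (hC 0)⟩, lipschitzWith_of_nnnorm_deriv_le hf hC⟩

theorem exists_bounded_continuous_eqOn_derivWithin_Icc {q : ℝ → ℝ} {a b : ℝ} (hab : a < b)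
    (hq : ContDiffOn ℝ 1 q (Icc a b)) :
    ∃ g : ℝ → ℝ, Continuous g ∧ (∃ G, ∀ x, |g x| ≤ G) ∧
      EqOn g (derivWithin q (Icc a b)) (Icc a b) ∧
      ∀ x ∈ Icc a b, ∫ y in a..x, g y = q x - q a := by
  have hderiv_cont : ContinuousOn (derivWithin q (Icc a b)) (Icc a b) :=
    hq.continuousOn_derivWithin (uniqueDiffOn_Icc hab) le_rfl
  obtain ⟨G, hG⟩ := isCompact_Icc.exists_bound_of_continuousOn hderiv_cont
  let g := IccExtend hab.le ((Icc a b).domRestrict (derivWithin q (Icc a b)))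
  have hg_cont : Continuous g := hderiv_cont.domRestrict.Icc_extend'
  have hg_eq : EqOn g (derivWithin q (Icc a b)) (Icc a b) := fun x hx =>
    IccExtend_of_mem _ _ hx
  refine ⟨g, hg_cont, ⟨G, fun x => hG _ (Subtype.mem _)⟩, hg_eq, fun x hx => ?_⟩
  refine intervalIntegral.integral_eq_sub_of_hasDerivAt_of_le hx.1
    (hq.continuousOn.mono (Icc_subset_Icc_right hx.2)) (fun y hy => ?_)
    (hg_cont.intervalIntegrable a x)
  have hy' : y ∈ Ioo a b := ⟨hy.1, hy.2.trans_le hx.2⟩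
  rw [hg_eq (Ioo_subset_Icc_self hy')]
  exact (hq.differentiableOn one_ne_zero y (Ioo_subset_Icc_self hy')).hasDerivWithinAt.hasDerivAt
    (Icc_mem_nhds hy'.1 hy'.2)

end General

/-! ### The slope equation along characteristics -/

/-- The closed half-strip `τ ≥ 0`, `0 ≤ η ≤ 1`. -/
abbrev strip : Set (ℝ × ℝ) := Ici 0 ×ˢ Icc 0 1

/-- `∫₀^η R(τ, y) dy`, which recovers the phase `Q` from its slope `R = ∂_η Q`. -/
def spacePrimitive (R : ℝ × ℝ → ℝ) (τ η : ℝ) : ℝ := ∫ y in (0 : ℝ)..η, R (τ, y)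

/-- The slope with which the characteristic `η = s - c` enters the half-strip: the initial slope
`R₀(-c)` for `c ≤ 0`, and `R(c, 1) - κ` for `c ≥ 0`. The jump `κ = K(Φ_F) - K(0)` is encoded as
`R(0, 1) - R₀(0)`, which makes both cases agree at `c = 0`. -/
def slopeBirth (R₀ : ℝ → ℝ) (R : ℝ × ℝ → ℝ) (c : ℝ) : ℝ :=
  R₀ (max (-c) 0) + (R (max c 0, 1) - R (0, 1))

/-- The logarithm of the factor by which the slope grows along the characteristic `η = s - c`
between its entrance time `max c 0` and `s`. -/
def slopeExponent (K : ℝ → ℝ) (R : ℝ × ℝ → ℝ) (s c : ℝ) : ℝ :=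
  ∫ r in max c 0..s, deriv K (spacePrimitive R r (r - c))

/-- The solution at time `s` on the characteristic `η = s - c` of the slope equation
`∂_τ S + ∂_η S = K'(∫₀^η R) S`, with entrance values given by `R`. -/
def slopeAlong (K R₀ : ℝ → ℝ) (R : ℝ × ℝ → ℝ) (s c : ℝ) : ℝ :=
  slopeBirth R₀ R c * exp (slopeExponent K R s c)

/-- A continuous mild solution `R = ∂_η Q` of the slope equation with initial slope `R₀`. -/
structure IsMildSlope (K R₀ : ℝ → ℝ) (R : ℝ × ℝ → ℝ) : Prop where
  continuous : Continuous R
  eq_slopeAlong : ∀ τ η, (τ, η) ∈ strip → R (τ, η) = slopeAlong K R₀ R τ (τ - η)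

/-- The phase `∫₀^η R(τ, y) dy` of a mild slope `R`, written as an integral over characteristics.
Unlike `R`, the function `slopeAlong K R₀ R` is differentiable in time, so this formula can be
differentiated. -/
def slopePhase (K R₀ : ℝ → ℝ) (R : ℝ × ℝ → ℝ) (τ η : ℝ) : ℝ :=
  ∫ c in τ - η..τ, slopeAlong K R₀ R τ c

section SlopeRegularity

variable {K R₀ : ℝ → ℝ} {R : ℝ × ℝ → ℝ}

theorem continuous_spacePrimitive (hR : Continuous R) :
    Continuous (Function.uncurry (spacePrimitive R)) :=
  continuous_intervalIntegral_of_continuous (X := ℝ × ℝ) (F := fun p y => R (p.1, y))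
    (by fun_prop) continuous_const continuous_snd

theorem continuous_deriv_spacePrimitive_characteristic (hK : Continuous (deriv K))
    (hR : Continuous R) :
    Continuous fun p : ℝ × ℝ => deriv K (spacePrimitive R p.1 (p.1 - p.2)) :=
  hK.comp ((continuous_spacePrimitive hR).comp
    (continuous_fst.prodMk (continuous_fst.sub continuous_snd)))

theorem continuous_slopeAlong (hK : Continuous (deriv K)) (hR₀ : Continuous R₀)
    (hR : Continuous R) : Continuous (Function.uncurry (slopeAlong K R₀ R)) := by
  have hbirth : Continuous (slopeBirth R₀ R) := by
    unfold slopeBirth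
    fun_prop
  have hexponent : Continuous (Function.uncurry (slopeExponent K R)) :=
    continuous_intervalIntegral_of_continuous
      (F := fun (p : ℝ × ℝ) r => deriv K (spacePrimitive R r (r - p.2)))
      ((continuous_deriv_spacePrimitive_characteristic hK hR).comp
        (g := fun q : ℝ × ℝ => deriv K (spacePrimitive R q.1 (q.1 - q.2)))
        (f := fun q : (ℝ × ℝ) × ℝ => (q.2, q.1.2)) (by fun_prop))
      (by fun_prop) continuous_fst
  exact (hbirth.comp continuous_snd).mul hexponent.rexp

theorem hasDerivAt_slopeAlong (hK : Continuous (deriv K)) (hR : Continuous R) (s c : ℝ) :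
    HasDerivAt (fun s => slopeAlong K R₀ R s c)
      (deriv K (spacePrimitive R s (s - c)) * slopeAlong K R₀ R s c) s := by
  have hcont : Continuous fun r => deriv K (spacePrimitive R r (r - c)) :=
    (continuous_deriv_spacePrimitive_characteristic hK hR).comp (Continuous.prodMk_left c)
  refine ((hcont.integral_hasStrictDerivAt (max c 0) s).hasDerivAt.exp.const_mul
    (slopeBirth R₀ R c)).congr_deriv ?_
  rw [slopeAlong, slopeExponent]
  ring

theorem slopeAlong_self {τ : ℝ} (hτ : 0 ≤ τ) :
    slopeAlong K R₀ R τ τ = R₀ 0 + (R (τ, 1) - R (0, 1)) := by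
  simp [slopeAlong, slopeBirth, slopeExponent, hτ]

theorem slopeAlong_zero_neg {η : ℝ} (hη : 0 ≤ η) : slopeAlong K R₀ R 0 (-η) = R₀ η := by
  simp [slopeAlong, slopeBirth, slopeExponent, hη]

theorem hasDerivAt_slopePhase_eta (hK : Continuous (deriv K)) (hR₀ : Continuous R₀)
    (hR : Continuous R) (τ η : ℝ) :
    HasDerivAt (slopePhase K R₀ R τ) (slopeAlong K R₀ R τ (τ - η)) η := by
  have hcont := (continuous_slopeAlong hK hR₀ hR).uncurry_left τ
  have hleft := intervalIntegral.integral_hasDerivAt_left (hcont.intervalIntegrable (τ - η) τ)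
    hcont.stronglyMeasurable.stronglyMeasurableAtFilter hcont.continuousAt
  exact (hleft.comp η ((hasDerivAt_id η).const_sub τ)).congr_deriv (by simp)

theorem hasDerivAt_slopePhase_tau (hK : Continuous (deriv K)) (hR₀ : Continuous R₀)
    (hR : Continuous R) (τ η : ℝ) :
    HasDerivAt (fun s => slopePhase K R₀ R s η)
      ((∫ c in τ - η..τ, deriv K (spacePrimitive R τ (τ - c)) * slopeAlong K R₀ R τ c)
        + slopeAlong K R₀ R τ τ - slopeAlong K R₀ R τ (τ - η)) τ := by
  have hcont := continuous_slopeAlong hK hR₀ hR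
  simpa only [slopePhase, one_mul] using hasDerivAt_intervalIntegral_of_moving_endpoints
    (hasDerivAt_slopeAlong hK hR) hcont
    ((continuous_deriv_spacePrimitive_characteristic hK hR).mul hcont)
    ((hasDerivAt_id' τ).sub_const η) (hasDerivAt_id' τ)

theorem contDiff_slopePhase (hK : Continuous (deriv K)) (hR₀ : Continuous R₀)
    (hR : Continuous R) : ContDiff ℝ 1 (Function.uncurry (slopePhase K R₀ R)) := by
  have hcont := continuous_slopeAlong hK hR₀ hR
  have hdiag : Continuous fun p : ℝ × ℝ => slopeAlong K R₀ R p.1 (p.1 - p.2) :=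
    hcont.comp (continuous_fst.prodMk (continuous_fst.sub continuous_snd))
  refine contDiff_one_uncurry_of_hasDerivAt (hasDerivAt_slopePhase_tau hK hR₀ hR)
    (hasDerivAt_slopePhase_eta hK hR₀ hR) (.sub (.add ?_ ?_) hdiag) hdiag
  · exact continuous_intervalIntegral_of_continuous (X := ℝ × ℝ)
      (F := fun p c => deriv K (spacePrimitive R p.1 (p.1 - c)) * slopeAlong K R₀ R p.1 c)
      (((continuous_deriv_spacePrimitive_characteristic hK hR).mul hcont).comp
        (f := fun q : (ℝ × ℝ) × ℝ => (q.1.1, q.2)) (by fun_prop))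
      (continuous_fst.sub continuous_snd) continuous_fst
  · exact hcont.comp (continuous_fst.prodMk continuous_fst)

end SlopeRegularity

namespace IsMildSlope

variable {K R₀ : ℝ → ℝ} {R : ℝ × ℝ → ℝ} {τ η : ℝ}

theorem apply_zero (h : IsMildSlope K R₀ R) (hη : η ∈ Icc (0 : ℝ) 1) : R (0, η) = R₀ η := by
  rw [h.eq_slopeAlong 0 η ⟨self_mem_Ici, hη⟩, zero_sub, slopeAlong_zero_neg hη.1]

theorem eqOn_slopeAlong (h : IsMildSlope K R₀ R) (hτ : 0 ≤ τ) (hη : η ∈ Icc (0 : ℝ) 1) :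
    EqOn (slopeAlong K R₀ R τ) (fun c => R (τ, τ - c)) (uIcc (τ - η) τ) := by
  intro c hc
  rw [uIcc_of_le (sub_le_self τ hη.1)] at hc
  have hmem : (τ, τ - c) ∈ strip := ⟨hτ, by linarith [hc.2], by linarith [hc.1, hη.2]⟩
  simp only [h.eq_slopeAlong τ (τ - c) hmem, sub_sub_cancel]

theorem slopePhase_eq (h : IsMildSlope K R₀ R) (hτ : 0 ≤ τ) (hη : η ∈ Icc (0 : ℝ) 1) :
    slopePhase K R₀ R τ η = spacePrimitive R τ η := by
  rw [slopePhase, intervalIntegral.integral_congr (h.eqOn_slopeAlong hτ hη),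
    intervalIntegral.integral_comp_sub_left (fun y => R (τ, y)), sub_self, sub_sub_cancel,
    spacePrimitive]

theorem integral_deriv_mul_slopeAlong (h : IsMildSlope K R₀ R) (hK : ContDiff ℝ 1 K)
    (hτ : 0 ≤ τ) (hη : η ∈ Icc (0 : ℝ) 1) :
    ∫ c in τ - η..τ, deriv K (spacePrimitive R τ (τ - c)) * slopeAlong K R₀ R τ c
      = K (spacePrimitive R τ η) - K 0 := by
  have hslice : Continuous fun y => R (τ, y) := h.continuous.comp (Continuous.prodMk_right τ)
  have hchain (y : ℝ) : HasDerivAt (fun y => K (spacePrimitive R τ y))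
      (deriv K (spacePrimitive R τ y) * R (τ, y)) y :=
    (hK.differentiable one_ne_zero _).hasDerivAt.comp y
      (hslice.integral_hasStrictDerivAt 0 y).hasDerivAt
  have hcont : Continuous fun y => deriv K (spacePrimitive R τ y) * R (τ, y) :=
    ((hK.continuous_deriv le_rfl).comp
      ((continuous_spacePrimitive h.continuous).uncurry_left τ)).mul hslice
  calc ∫ c in τ - η..τ, deriv K (spacePrimitive R τ (τ - c)) * slopeAlong K R₀ R τ c
      = ∫ c in τ - η..τ, deriv K (spacePrimitive R τ (τ - c)) * R (τ, τ - c) :=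
        intervalIntegral.integral_congr fun c hc =>
          congrArg (deriv K (spacePrimitive R τ (τ - c)) * ·) (h.eqOn_slopeAlong hτ hη hc)
    _ = ∫ y in (0 : ℝ)..η, deriv K (spacePrimitive R τ y) * R (τ, y) := by
        rw [intervalIntegral.integral_comp_sub_left
          (fun y => deriv K (spacePrimitive R τ y) * R (τ, y)), sub_self, sub_sub_cancel]
    _ = K (spacePrimitive R τ η) - K 0 := by
        rw [intervalIntegral.integral_eq_sub_of_hasDerivAt (fun y _ => hchain y)
          (hcont.intervalIntegrable 0 η)]
        simp [spacePrimitive]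

theorem pdEta_slopePhase (h : IsMildSlope K R₀ R) (hK : Continuous (deriv K))
    (hR₀ : Continuous R₀) (hτ : 0 ≤ τ) (hη : η ∈ Icc (0 : ℝ) 1) :
    pdEta (slopePhase K R₀ R) τ η = R (τ, η) := by
  rw [h.eq_slopeAlong τ η ⟨hτ, hη⟩]
  exact (hasDerivAt_slopePhase_eta hK hR₀ h.continuous τ η).hasDerivWithinAt.derivWithin
    (uniqueDiffOn_Icc zero_lt_one η hη)

theorem pdTau_slopePhase (h : IsMildSlope K R₀ R) (hK : ContDiff ℝ 1 K)
    (hR₀ : Continuous R₀) (hτ : 0 ≤ τ) (hη : η ∈ Icc (0 : ℝ) 1) :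
    pdTau (slopePhase K R₀ R) τ η
      = K (slopePhase K R₀ R τ η) - K 0 + (R₀ 0 + (R (τ, 1) - R₀ 1)) - R (τ, η) := by
  rw [pdTau, (hasDerivAt_slopePhase_tau (hK.continuous_deriv le_rfl) hR₀ h.continuous τ
      η).hasDerivWithinAt.derivWithin (uniqueDiffOn_Ici 0 τ hτ),
    h.integral_deriv_mul_slopeAlong hK hτ hη, slopeAlong_self hτ, ← h.slopePhase_eq hτ hη,
    ← h.eq_slopeAlong τ η ⟨hτ, hη⟩, h.apply_zero (right_mem_Icc.2 zero_le_one)]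

theorem isRelaxedSol (h : IsMildSlope K R₀ R) (hK : ContDiff ℝ 1 K) (hR₀ : Continuous R₀)
    {ΦF : ℝ} {Qinit : ℝ → ℝ} (hQ : ContDiffOn ℝ 1 Qinit (Icc 0 1)) (hQ0 : Qinit 0 = 0)
    (hQ1 : Qinit 1 = ΦF) (hR₀_int : ∀ η ∈ Icc (0 : ℝ) 1, ∫ y in (0 : ℝ)..η, R₀ y = Qinit η)
    (hcompat : R₀ 1 - R₀ 0 = K ΦF - K 0) :
    IsRelaxedSol K ΦF ⊤ Qinit (slopePhase K R₀ R) fun τ => R (τ, 1) - K ΦF where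
  initReg := hQ
  init0 := hQ0
  init1 := hQ1
  reg := (contDiff_slopePhase (hK.continuous_deriv le_rfl) hR₀ h.continuous).contDiffOn
  Ncont := ((h.continuous.comp (Continuous.prodMk_left 1)).sub continuous_const).continuousOn
  pde τ hτ η hη := by
    have hη' := Ioo_subset_Icc_self hη
    rw [h.pdTau_slopePhase hK hR₀ hτ.1 hη',
      h.pdEta_slopePhase (hK.continuous_deriv le_rfl) hR₀ hτ.1 hη']
    linarith
  bc τ _ := by simp [slopePhase]
  Ndef τ hτ := by
    rw [h.pdEta_slopePhase (hK.continuous_deriv le_rfl) hR₀ hτ.1 (right_mem_Icc.2 zero_le_one)]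
  init η hη := by
    rw [h.slopePhase_eq le_rfl hη, ← hR₀_int η hη, spacePrimitive]
    refine intervalIntegral.integral_congr fun y hy => h.apply_zero ?_
    rw [uIcc_of_le hη.1] at hy
    exact ⟨hy.1, hy.2.trans hη.2⟩

end IsMildSlope

/-! ### Existence of a mild slope -/

/-- The point of the half-strip closest to `p`. -/
def toStrip (p : ℝ × ℝ) : ℝ × ℝ := (max p.1 0, max 0 (min 1 p.2))

/-- The a priori bound on slopes, preserved by `slopeAlong` when `|K'| ≤ L` and `|R₀| ≤ G`. The
factor `exp (2 * (1 - η))` absorbs the three terms of `slopeBirth`, as `3 ≤ exp 2`. -/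
def slopeBound (L G : ℝ) (p : ℝ × ℝ) : ℝ := G * exp ((L + 2) * p.1 + 2 * (1 - p.2))

/-- The weight of the norm in which `slopeAlong` is a contraction. Since the slopes may grow like
`exp ((L + 2) * τ)`, an exponential weight in time does not suffice. -/
def slopeWeight (L Λ : ℝ) (p : ℝ × ℝ) : ℝ := exp (Λ * exp ((L + 2) * p.1) + 2 * (1 - p.2))

section Weights

variable {L G Λ : ℝ}

theorem toStrip_mem (p : ℝ × ℝ) : toStrip p ∈ strip :=
  ⟨mem_Ici.2 (le_max_right _ _), le_max_left _ _, max_le zero_le_one (min_le_left _ _)⟩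

theorem toStrip_of_mem {p : ℝ × ℝ} (hp : p ∈ strip) : toStrip p = p := by
  have hτ : max p.1 0 = p.1 := max_eq_left hp.1
  have hη : max 0 (min 1 p.2) = p.2 := by rw [min_eq_right hp.2.2, max_eq_right hp.2.1]
  rw [toStrip, hτ, hη]

theorem continuous_toStrip : Continuous toStrip := by
  unfold toStrip
  fun_prop

theorem three_le_exp_two : (3 : ℝ) ≤ exp 2 := by
  linarith [add_one_le_exp (2 : ℝ)]

theorem slopeBound_nonneg (hG : 0 ≤ G) (p : ℝ × ℝ) : 0 ≤ slopeBound L G p :=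
  mul_nonneg hG (exp_pos _).le

theorem slopeBound_le_mul_slopeWeight (hG : 0 ≤ G) (hΛ : 1 ≤ Λ) (p : ℝ × ℝ) :
    slopeBound L G p ≤ G * slopeWeight L Λ p := by
  have hexp : (L + 2) * p.1 ≤ exp ((L + 2) * p.1) := by
    linarith [add_one_le_exp ((L + 2) * p.1)]
  have hΛexp : exp ((L + 2) * p.1) ≤ Λ * exp ((L + 2) * p.1) :=
    le_mul_of_one_le_left (exp_pos _).le hΛ
  exact mul_le_mul_of_nonneg_left (exp_le_exp.2 (by linarith)) hG

theorem slopeWeight_eq_mul (τ η : ℝ) :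
    slopeWeight L Λ (τ, η) = slopeWeight L Λ (τ, 1) * exp (2 * (1 - η)) := by
  simp [slopeWeight, ← exp_add]

theorem slopeWeight_mono_left (hL : 0 ≤ L) (hΛ : 0 ≤ Λ) {s τ : ℝ} (h : s ≤ τ) (η : ℝ) :
    slopeWeight L Λ (s, η) ≤ slopeWeight L Λ (τ, η) := by
  unfold slopeWeight
  gcongr

theorem slopeWeight_mul_exp_le (hL : 0 ≤ L) (hΛ : 1 ≤ Λ) {c η : ℝ} (hc : 0 ≤ c) (hη : 0 ≤ η) :
    slopeWeight L Λ (c, 1) * exp ((L + 2) * η) ≤ slopeWeight L Λ (c + η, 1) := by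
  have hx : 0 ≤ (L + 2) * η := by positivity
  have hgrow : Λ * exp ((L + 2) * c) + (L + 2) * η ≤ Λ * exp ((L + 2) * (c + η)) :=
    calc Λ * exp ((L + 2) * c) + (L + 2) * η
        ≤ Λ * exp ((L + 2) * c) + Λ * exp ((L + 2) * c) * ((L + 2) * η) :=
          (add_le_add_iff_left _).2 (le_mul_of_one_le_left hx
            (one_le_mul_of_one_le_of_one_le hΛ (one_le_exp (by positivity))))
      _ = Λ * exp ((L + 2) * c) * ((L + 2) * η + 1) := by ring
      _ ≤ Λ * exp ((L + 2) * c) * exp ((L + 2) * η) := by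
          gcongr
          exact add_one_le_exp _
      _ = Λ * exp ((L + 2) * (c + η)) := by rw [mul_assoc, ← exp_add, mul_add]
  simpa [slopeWeight, ← exp_add] using hgrow

theorem hasDerivAt_slopeWeight_time (τ : ℝ) :
    HasDerivAt (fun t => slopeWeight L Λ (t, 1))
      (Λ * (L + 2) * (exp ((L + 2) * τ) * slopeWeight L Λ (τ, 1))) τ := by
  have hinner : HasDerivAt (fun t => (L + 2) * t) (L + 2) τ := by
    simpa using (hasDerivAt_id τ).const_mul (L + 2)
  refine ((hinner.exp.const_mul Λ).add_const (2 * (1 - 1))).exp.congr_deriv ?_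
  rw [slopeWeight]
  ring

end Weights

section SlopeEstimates

variable {K R₀ : ℝ → ℝ} {R S : ℝ × ℝ → ℝ} {L G Λ C : ℝ} {L' : NNReal} {c s τ η : ℝ}

theorem slopeBirth_of_nonpos (hc : c ≤ 0) : slopeBirth R₀ R c = R₀ (-c) := by
  simp [slopeBirth, hc]

theorem slopeBirth_of_nonneg (hc : 0 ≤ c) :
    slopeBirth R₀ R c = R₀ 0 + (R (c, 1) - R (0, 1)) := by
  simp [slopeBirth, hc]

theorem abs_slopeBirth_le (hL : 0 ≤ L) (hR₀ : ∀ x, |R₀ x| ≤ G)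
    (hR : ∀ p ∈ strip, |R p| ≤ slopeBound L G p) :
    |slopeBirth R₀ R c| ≤ 3 * G * exp ((L + 2) * max c 0) := by
  have hG : 0 ≤ G := (abs_nonneg _).trans (hR₀ 0)
  have hone : (1 : ℝ) ∈ Icc (0 : ℝ) 1 := right_mem_Icc.2 zero_le_one
  rcases le_total c 0 with hc | hc
  · rw [slopeBirth_of_nonpos hc, max_eq_right hc, mul_zero, exp_zero]
    linarith [hR₀ (-c)]
  · rw [slopeBirth_of_nonneg hc, max_eq_left hc]
    have hR_c : |R (c, 1)| ≤ G * exp ((L + 2) * c) := by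
      simpa [slopeBound] using hR (c, 1) ⟨hc, hone⟩
    have hR_zero : |R (0, 1)| ≤ G := by
      simpa [slopeBound] using hR (0, 1) ⟨self_mem_Ici, hone⟩
    have hexp : G ≤ G * exp ((L + 2) * c) :=
      le_mul_of_one_le_right hG (one_le_exp (by positivity))
    linarith [hR₀ 0, abs_add_le (R₀ 0) (R (c, 1) - R (0, 1)), abs_sub (R (c, 1)) (R (0, 1))]

theorem abs_slopeBirth_sub_le (hL : 0 ≤ L) (hΛ : 0 ≤ Λ) (hc : 0 ≤ c)
    (hRS : ∀ p ∈ strip, |R p - S p| ≤ C * slopeWeight L Λ p) (hC : 0 ≤ C) :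
    |slopeBirth R₀ R c - slopeBirth R₀ S c| ≤ 2 * C * slopeWeight L Λ (c, 1) := by
  have hone : (1 : ℝ) ∈ Icc (0 : ℝ) 1 := right_mem_Icc.2 zero_le_one
  have hweight := mul_le_mul_of_nonneg_left (slopeWeight_mono_left hL hΛ hc 1) hC
  have hsplit : slopeBirth R₀ R c - slopeBirth R₀ S c
      = (R (c, 1) - S (c, 1)) - (R (0, 1) - S (0, 1)) := by
    rw [slopeBirth_of_nonneg hc, slopeBirth_of_nonneg hc]
    ring
  rw [hsplit]
  linarith [abs_sub (R (c, 1) - S (c, 1)) (R (0, 1) - S (0, 1)),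
    hRS (c, 1) ⟨hc, hone⟩, hRS (0, 1) ⟨self_mem_Ici, hone⟩]

theorem slopeExponent_le (hL : ∀ x, |deriv K x| ≤ L) (hcs : max c 0 ≤ s) :
    slopeExponent K R s c ≤ L * (s - max c 0) := by
  rw [← abs_of_nonneg (sub_nonneg.2 hcs)]
  exact (le_abs_self _).trans (intervalIntegral.norm_integral_le_of_norm_le_const
    (f := fun r => deriv K (spacePrimitive R r (r - c))) fun r _ => hL _)

theorem max_sub_zero_le (h : (τ, η) ∈ strip) : max (τ - η) 0 ≤ τ :=
  max_le (sub_le_self τ h.2.1) h.1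

theorem abs_slopeAlong_le (hL : ∀ x, |deriv K x| ≤ L) (hR₀ : ∀ x, |R₀ x| ≤ G)
    (hR : ∀ p ∈ strip, |R p| ≤ slopeBound L G p) (h : (τ, η) ∈ strip) :
    |slopeAlong K R₀ R τ (τ - η)| ≤ slopeBound L G (τ, η) := by
  have hL0 : 0 ≤ L := (abs_nonneg _).trans (hL 0)
  have hG : 0 ≤ G := (abs_nonneg _).trans (hR₀ 0)
  have hgrowth := exp_le_exp.2 (slopeExponent_le (R := R) hL (max_sub_zero_le h))
  rw [slopeAlong, abs_mul, abs_exp]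
  rcases le_total (τ - η) 0 with hc | hc
  · rw [max_eq_right hc, sub_zero] at hgrowth
    have hbirth : |slopeBirth R₀ R (τ - η)| ≤ G := by
      simpa [slopeBirth_of_nonpos hc] using hR₀ (η - τ)
    calc |slopeBirth R₀ R (τ - η)| * exp (slopeExponent K R τ (τ - η))
        ≤ G * exp (L * τ) := mul_le_mul hbirth hgrowth (exp_pos _).le hG
      _ ≤ slopeBound L G (τ, η) := by
          refine mul_le_mul_of_nonneg_left (exp_le_exp.2 ?_) hG
          have hτ : 0 ≤ τ := h.1
          have hη : η ≤ 1 := h.2.2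
          linarith
  · have hbirth := abs_slopeBirth_le (c := τ - η) hL0 hR₀ hR
    rw [max_eq_left hc] at hgrowth hbirth
    calc |slopeBirth R₀ R (τ - η)| * exp (slopeExponent K R τ (τ - η))
        ≤ 3 * G * exp ((L + 2) * (τ - η)) * exp (L * (τ - (τ - η))) :=
          mul_le_mul hbirth hgrowth (exp_pos _).le (by positivity)
      _ ≤ exp 2 * G * exp ((L + 2) * (τ - η)) * exp (L * (τ - (τ - η))) := by
          gcongr
          exact three_le_exp_two
      _ = slopeBound L G (τ, η) := by
          rw [mul_comm (exp 2), mul_assoc, mul_assoc, ← exp_add, ← exp_add, slopeBound]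
          ring_nf

theorem abs_slopeBirth_sub_mul_exp_le (hL : ∀ x, |deriv K x| ≤ L) (hΛ : 1 ≤ Λ)
    (hC : 0 ≤ C) (hRS : ∀ p ∈ strip, |R p - S p| ≤ C * slopeWeight L Λ p)
    (h : (τ, η) ∈ strip) :
    |slopeBirth R₀ R (τ - η) - slopeBirth R₀ S (τ - η)| * exp (slopeExponent K R τ (τ - η))
      ≤ 2 / 3 * C * slopeWeight L Λ (τ, η) := by
  have hL0 : 0 ≤ L := (abs_nonneg _).trans (hL 0)
  have hweight : 0 < slopeWeight L Λ (τ, η) := exp_pos _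
  rcases le_total (τ - η) 0 with hc | hc
  · rw [slopeBirth_of_nonpos hc, slopeBirth_of_nonpos hc, sub_self, abs_zero, zero_mul]
    positivity
  have hgrowth := exp_le_exp.2 (slopeExponent_le (R := R) hL (max_sub_zero_le h))
  rw [max_eq_left hc, sub_sub_cancel] at hgrowth
  have hwc : 0 < slopeWeight L Λ (τ - η, 1) := exp_pos _
  have hentrance : 3 * (slopeWeight L Λ (τ - η, 1) * exp (L * η)) ≤ slopeWeight L Λ (τ, η) :=
    calc 3 * (slopeWeight L Λ (τ - η, 1) * exp (L * η))
        ≤ exp 2 * (slopeWeight L Λ (τ - η, 1) * exp (L * η)) := by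
          gcongr
          exact three_le_exp_two
      _ = slopeWeight L Λ (τ - η, 1) * exp ((L + 2) * η) * exp (2 * (1 - η)) := by
          rw [mul_left_comm, ← exp_add, mul_assoc, ← exp_add]
          ring_nf
      _ ≤ slopeWeight L Λ (τ - η + η, 1) * exp (2 * (1 - η)) := by
          gcongr
          exact slopeWeight_mul_exp_le hL0 hΛ hc h.2.1
      _ = slopeWeight L Λ (τ, η) := by rw [sub_add_cancel, ← slopeWeight_eq_mul]
  calc |slopeBirth R₀ R (τ - η) - slopeBirth R₀ S (τ - η)| * exp (slopeExponent K R τ (τ - η))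
      ≤ 2 * C * slopeWeight L Λ (τ - η, 1) * exp (L * η) :=
        mul_le_mul (abs_slopeBirth_sub_le hL0 (by linarith) hc hRS hC) hgrowth (exp_pos _).le
          (by positivity)
    _ = 2 / 3 * C * (3 * (slopeWeight L Λ (τ - η, 1) * exp (L * η))) := by ring
    _ ≤ 2 / 3 * C * slopeWeight L Λ (τ, η) := by gcongr

theorem abs_spacePrimitive_sub_le (hR : Continuous R) (hS : Continuous S) (hC : 0 ≤ C)
    (hRS : ∀ p ∈ strip, |R p - S p| ≤ C * slopeWeight L Λ p) (h : (τ, η) ∈ strip) :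
    |spacePrimitive R τ η - spacePrimitive S τ η| ≤ C * (slopeWeight L Λ (τ, 1) * exp 2) := by
  have hw : 0 < slopeWeight L Λ (τ, 1) := exp_pos _
  have hpointwise : ∀ y ∈ uIoc 0 η,
      ‖R (τ, y) - S (τ, y)‖ ≤ C * (slopeWeight L Λ (τ, 1) * exp 2) := by
    intro y hy
    rw [uIoc_of_le h.2.1] at hy
    refine (hRS (τ, y) ⟨h.1, hy.1.le, hy.2.trans h.2.2⟩).trans ?_
    rw [slopeWeight_eq_mul]
    gcongr
    linarith [hy.1]
  have hintegrable {R : ℝ × ℝ → ℝ} (hR : Continuous R) :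
      IntervalIntegrable (fun y => R (τ, y)) volume 0 η :=
    (hR.comp (Continuous.prodMk_right τ)).intervalIntegrable _ _
  rw [spacePrimitive, spacePrimitive,
    ← intervalIntegral.integral_sub (hintegrable hR) (hintegrable hS)]
  refine (intervalIntegral.norm_integral_le_of_norm_le_const hpointwise).trans
    (mul_le_of_le_one_right (by positivity) ?_)
  rw [sub_zero, abs_of_nonneg h.2.1]
  exact h.2.2

theorem exp_mul_abs_slopeExponent_sub_le (hL : 0 ≤ L) (hK : LipschitzWith L' (deriv K))
    (hΛ : 1 ≤ Λ) (hR : Continuous R) (hS : Continuous S) (hC : 0 ≤ C)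
    (hRS : ∀ p ∈ strip, |R p - S p| ≤ C * slopeWeight L Λ p) (h : (τ, η) ∈ strip) :
    exp ((L + 2) * max (τ - η) 0)
        * |slopeExponent K R τ (τ - η) - slopeExponent K S τ (τ - η)|
      ≤ L' * C * exp 2 / (Λ * (L + 2)) * slopeWeight L Λ (τ, 1) := by
  set c := τ - η with hc_def
  have hintegrable {R : ℝ × ℝ → ℝ} (hR : Continuous R) : IntervalIntegrable
      (fun r => deriv K (spacePrimitive R r (r - c))) volume (max c 0) τ :=
    ((continuous_deriv_spacePrimitive_characteristic hK.continuous hR).comp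
      (Continuous.prodMk_left c)).intervalIntegrable _ _
  rw [← abs_of_pos (exp_pos ((L + 2) * max c 0)), ← abs_mul, slopeExponent, slopeExponent,
    ← intervalIntegral.integral_sub (hintegrable hR) (hintegrable hS),
    ← intervalIntegral.integral_const_mul]
  refine abs_intervalIntegral_le_of_abs_le_deriv
    (W := fun t => L' * C * exp 2 / (Λ * (L + 2)) * slopeWeight L Λ (t, 1))
    (W' := fun t => L' * C * exp 2 * (exp ((L + 2) * t) * slopeWeight L Λ (t, 1)))
    (max_sub_zero_le h) (fun t => ?_) ?_ ?_ fun r hr => ?_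
  · refine ((hasDerivAt_slopeWeight_time t).const_mul _).congr_deriv ?_
    field_simp
  · unfold slopeWeight
    fun_prop
  · have : 0 < slopeWeight L Λ (max c 0, 1) := exp_pos _
    positivity
  · have hr_mem : (r, r - c) ∈ strip :=
      ⟨(le_max_right c 0).trans hr.1.le, by linarith [le_max_left c 0, hr.1],
        by linarith [hr.2, h.2.2, hc_def]⟩
    have hlip := (hK.norm_sub_le (spacePrimitive R r (r - c)) (spacePrimitive S r (r - c))).trans
      (mul_le_mul_of_nonneg_left (abs_spacePrimitive_sub_le hR hS hC hRS hr_mem) L'.2)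
    rw [abs_mul, abs_of_pos (exp_pos _)]
    calc exp ((L + 2) * max c 0) * _
        ≤ exp ((L + 2) * r) * (L' * (C * (slopeWeight L Λ (r, 1) * exp 2))) := by
          refine mul_le_mul ?_ hlip (abs_nonneg _) (exp_pos _).le
          gcongr
          exact hr.1.le
      _ = _ := by ring

theorem abs_slopeBirth_mul_abs_exp_sub_le (hL : ∀ x, |deriv K x| ≤ L)
    (hK : LipschitzWith L' (deriv K)) (hR₀ : ∀ x, |R₀ x| ≤ G) (hΛ : 1 ≤ Λ)
    (hΛG : 9 * G * exp (L + 2) * L' ≤ Λ) (hR : Continuous R) (hS : Continuous S)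
    (hS_bound : ∀ p ∈ strip, |S p| ≤ slopeBound L G p) (hC : 0 ≤ C)
    (hRS : ∀ p ∈ strip, |R p - S p| ≤ C * slopeWeight L Λ p) (h : (τ, η) ∈ strip) :
    |slopeBirth R₀ S (τ - η)|
        * |exp (slopeExponent K R τ (τ - η)) - exp (slopeExponent K S τ (τ - η))|
      ≤ 1 / 6 * C * slopeWeight L Λ (τ, η) := by
  have hL0 : 0 ≤ L := (abs_nonneg _).trans (hL 0)
  have hG : 0 ≤ G := (abs_nonneg _).trans (hR₀ 0)
  have hw : 0 < slopeWeight L Λ (τ, 1) := exp_pos _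
  set c := τ - η
  have hlength : L * (τ - max c 0) ≤ L :=
    mul_le_of_le_one_right hL0 (by linarith [le_max_left c 0, h.2.2])
  have hgrowth := abs_exp_sub_exp_le
    ((slopeExponent_le (R := R) hL (max_sub_zero_le h)).trans hlength)
    ((slopeExponent_le (R := S) hL (max_sub_zero_le h)).trans hlength)
  have hexponent := exp_mul_abs_slopeExponent_sub_le hL0 hK hΛ hR hS hC hRS h
  have hconst : 3 * G * exp L * (L' * C * exp 2 / (Λ * (L + 2))) ≤ 1 / 6 * C := by
    rw [exp_add] at hΛG
    rw [mul_div_assoc', div_le_iff₀ (by positivity)]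
    calc 3 * G * exp L * (L' * C * exp 2) = C / 3 * (9 * G * (exp L * exp 2) * L') := by ring
      _ ≤ C / 3 * Λ := by gcongr
      _ = 1 / 6 * C * (Λ * 2) := by ring
      _ ≤ 1 / 6 * C * (Λ * (L + 2)) := by
          gcongr
          linarith
  calc |slopeBirth R₀ S c| * |exp (slopeExponent K R τ c) - exp (slopeExponent K S τ c)|
      ≤ 3 * G * exp ((L + 2) * max c 0)
          * (exp L * |slopeExponent K R τ c - slopeExponent K S τ c|) :=
        mul_le_mul (abs_slopeBirth_le hL0 hR₀ hS_bound) hgrowth (abs_nonneg _) (by positivity)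
    _ = 3 * G * exp L
          * (exp ((L + 2) * max c 0) * |slopeExponent K R τ c - slopeExponent K S τ c|) := by
        ring
    _ ≤ 3 * G * exp L * (L' * C * exp 2 / (Λ * (L + 2)) * slopeWeight L Λ (τ, 1)) := by gcongr
    _ = 3 * G * exp L * (L' * C * exp 2 / (Λ * (L + 2))) * slopeWeight L Λ (τ, 1) := by ring
    _ ≤ 1 / 6 * C * slopeWeight L Λ (τ, 1) := by gcongr
    _ ≤ 1 / 6 * C * slopeWeight L Λ (τ, η) := by
        rw [slopeWeight_eq_mul τ η]
        gcongr
        exact le_mul_of_one_le_right hw.le (one_le_exp (by linarith [h.2.2]))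

theorem abs_slopeAlong_sub_le (hL : ∀ x, |deriv K x| ≤ L)
    (hK : LipschitzWith L' (deriv K)) (hR₀ : ∀ x, |R₀ x| ≤ G) (hΛ : 1 ≤ Λ)
    (hΛG : 9 * G * exp (L + 2) * L' ≤ Λ) (hR : Continuous R) (hS : Continuous S)
    (hS_bound : ∀ p ∈ strip, |S p| ≤ slopeBound L G p) (hC : 0 ≤ C)
    (hRS : ∀ p ∈ strip, |R p - S p| ≤ C * slopeWeight L Λ p) (h : (τ, η) ∈ strip) :
    |slopeAlong K R₀ R τ (τ - η) - slopeAlong K R₀ S τ (τ - η)|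
      ≤ 5 / 6 * C * slopeWeight L Λ (τ, η) := by
  have hsplit : slopeAlong K R₀ R τ (τ - η) - slopeAlong K R₀ S τ (τ - η)
      = (slopeBirth R₀ R (τ - η) - slopeBirth R₀ S (τ - η)) * exp (slopeExponent K R τ (τ - η))
        + slopeBirth R₀ S (τ - η)
          * (exp (slopeExponent K R τ (τ - η)) - exp (slopeExponent K S τ (τ - η))) := by
    simp only [slopeAlong]
    ring
  have hbirth := abs_slopeBirth_sub_mul_exp_le (R₀ := R₀) hL hΛ hC hRS h
  have hgrowth := abs_slopeBirth_mul_abs_exp_sub_le hL hK hR₀ hΛ hΛG hR hS hS_bound hC hRS h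
  rw [hsplit]
  refine (abs_add_le _ _).trans ?_
  rw [abs_mul, abs_mul, abs_exp]
  linarith

theorem exists_isMildSlope (hL : ∀ x, |deriv K x| ≤ L) (hK : LipschitzWith L' (deriv K))
    (hR₀ : Continuous R₀) (hR₀_bound : ∀ x, |R₀ x| ≤ G) : ∃ R, IsMildSlope K R₀ R := by
  have hG : 0 ≤ G := (abs_nonneg _).trans (hR₀_bound 0)
  obtain ⟨Λ, hΛ, hΛG⟩ : ∃ Λ : ℝ, 1 ≤ Λ ∧ 9 * G * exp (L + 2) * L' ≤ Λ :=
    ⟨_, le_max_left _ _, le_max_right _ _⟩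
  have extend {f g : ℝ × ℝ → ℝ} (hfg : ∀ p, f p ≤ g (toStrip p)) : ∀ p ∈ strip, f p ≤ g p :=
    fun p hp => (hfg p).trans_eq (congrArg g (toStrip_of_mem hp))
  have hcontr {R S : ℝ × ℝ → ℝ} (hR : Continuous R) (hS : Continuous S)
      (hS_bound : ∀ p, |S p| ≤ slopeBound L G (toStrip p)) (C : ℝ)
      (hRS : ∀ p, |R p - S p| ≤ C * slopeWeight L Λ (toStrip p)) (p : ℝ × ℝ) :=
    abs_slopeAlong_sub_le hL hK hR₀_bound hΛ hΛG hR hS (extend hS_bound)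
      (nonneg_of_mul_nonneg_left ((abs_nonneg _).trans (hRS p)) (exp_pos _))
      (extend (g := fun p => C * slopeWeight L Λ p) hRS) (toStrip_mem p)
  obtain ⟨R, hR, hfix⟩ := exists_continuous_fixedPoint_of_weighted_contraction
    (ω := fun p => slopeWeight L Λ (toStrip p)) (β := fun p => slopeBound L G (toStrip p))
    (B := G) (θ := 5 / 6)
    (Γ := fun R p => slopeAlong K R₀ R (toStrip p).1 ((toStrip p).1 - (toStrip p).2))
    (by unfold slopeWeight; have := continuous_toStrip; fun_prop)
    (fun p => exp_pos _) (fun p => slopeBound_nonneg hG _)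
    (fun p => slopeBound_le_mul_slopeWeight hG hΛ _) (by norm_num)
    (fun R hR => (continuous_slopeAlong hK.continuous hR₀ hR).comp
      (continuous_toStrip.fst.prodMk (continuous_toStrip.fst.sub continuous_toStrip.snd)))
    (fun R _ hR_bound p => abs_slopeAlong_le hL hR₀_bound (extend hR_bound) (toStrip_mem p))
    (fun R S hR hS _ hS_bound => hcontr hR hS hS_bound)
  refine ⟨R, hR, fun τ η h => ?_⟩
  simpa only [toStrip_of_mem h] using (congrFun hfix (τ, η)).symm

end SlopeEstimates

/-! ### The time interval -/

theorem mem_Ico0_top {τ : ℝ} : τ ∈ Ico0 ⊤ ↔ 0 ≤ τ := by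
  simp [Ico0]

theorem Ico0_mono {T T' : ℝ≥0∞} (hT : T ≤ T') : Ico0 T ⊆ Ico0 T' :=
  fun _ hτ => ⟨hτ.1, hτ.2.trans_le hT⟩

theorem Icc_subset_Ico0 {T : ℝ≥0∞} {a b : ℝ} (ha : 0 ≤ a) (hb : b ∈ Ico0 T) : Icc a b ⊆ Ico0 T :=
  fun _ hr => ⟨ha.trans hr.1, (ENNReal.ofReal_le_ofReal hr.2).trans_lt hb.2⟩

theorem Ico0_mem_nhdsWithin_Ici {T : ℝ≥0∞} {τ : ℝ} (hτ : τ ∈ Ico0 T) : Ico0 T ∈ 𝓝[Ici 0] τ :=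
  inter_mem self_mem_nhdsWithin (mem_nhdsWithin_of_mem_nhds
    (ENNReal.continuous_ofReal.continuousAt.preimage_mem_nhds (Iio_mem_nhds hτ.2)))

theorem uniqueDiffOn_Ico0_prod_Icc (T : ℝ≥0∞) : UniqueDiffOn ℝ (Ico0 T ×ˢ Icc (0 : ℝ) 1) := by
  refine UniqueDiffOn.prod (fun τ hτ => ?_) (uniqueDiffOn_Icc zero_lt_one)
  exact (uniqueDiffOn_Ici 0 τ hτ.1).mono_nhds (nhdsWithin_le_of_mem (Ico0_mem_nhdsWithin_Ici hτ))

/-! ### Partial derivatives of a function of class `C¹` up to the boundary -/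

section PartialDerivatives

variable {T : ℝ≥0∞} {Q : ℝ → ℝ → ℝ} {τ η : ℝ}

theorem hasDerivWithinAt_pdTau
    (hQ : ContDiffOn ℝ 1 (Function.uncurry Q) (Ico0 T ×ˢ Icc (0 : ℝ) 1))
    (hτ : τ ∈ Ico0 T) (hη : η ∈ Icc (0 : ℝ) 1) :
    HasDerivWithinAt (fun s => Q s η) (pdTau Q τ η) (Ici 0) τ := by
  have hline : DifferentiableWithinAt ℝ (fun s => Q s η) (Ico0 T) τ :=
    (hQ.differentiableOn one_ne_zero (τ, η) ⟨hτ, hη⟩).comp τ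
      (f := fun s => (s, η)) (by fun_prop) fun s hs => ⟨hs, hη⟩
  exact (hline.mono_of_mem_nhdsWithin (Ico0_mem_nhdsWithin_Ici hτ)).hasDerivWithinAt

theorem fderivWithin_apply_one_one
    (hQ : ContDiffOn ℝ 1 (Function.uncurry Q) (Ico0 T ×ˢ Icc (0 : ℝ) 1))
    (hτ : τ ∈ Ico0 T) (hη : η ∈ Icc (0 : ℝ) 1) :
    fderivWithin ℝ (Function.uncurry Q) (Ico0 T ×ˢ Icc 0 1) (τ, η) (1, 1)
      = pdTau Q τ η + pdEta Q τ η := by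
  have hfderiv := (hQ.differentiableOn one_ne_zero (τ, η) ⟨hτ, hη⟩).hasFDerivWithinAt
  have htime := hfderiv.comp_hasDerivWithinAt τ (s := Ico0 T) (f := fun s => (s, η))
    ((hasDerivWithinAt_id τ _).prodMk (hasDerivWithinAt_const _ _ _)) fun s hs => ⟨hs, hη⟩
  have hspace := hfderiv.comp_hasDerivWithinAt η (s := Icc 0 1) (f := fun x => (τ, x))
    ((hasDerivWithinAt_const _ _ _).prodMk (hasDerivWithinAt_id η _)) fun x hx => ⟨hτ, hx⟩
  have htime' := htime.mono_of_mem_nhdsWithin (Ico0_mem_nhdsWithin_Ici hτ)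
  rw [pdTau, pdEta, show (fun s => Q s η) = Function.uncurry Q ∘ fun s => (s, η) from rfl,
    htime'.derivWithin (uniqueDiffOn_Ici 0 τ hτ.1),
    show (fun x => Q τ x) = Function.uncurry Q ∘ fun x => (τ, x) from rfl,
    hspace.derivWithin (uniqueDiffOn_Icc zero_lt_one η hη), ← map_add]
  simp

theorem continuousOn_pdTau_add_pdEta
    (hQ : ContDiffOn ℝ 1 (Function.uncurry Q) (Ico0 T ×ˢ Icc (0 : ℝ) 1)) (hτ : τ ∈ Ico0 T) :
    ContinuousOn (fun η => pdTau Q τ η + pdEta Q τ η) (Icc 0 1) := by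
  have hfderiv := (hQ.continuousOn_fderivWithin (uniqueDiffOn_Ico0_prod_Icc T) le_rfl).clm_apply
    (continuousOn_const (c := ((1, 1) : ℝ × ℝ)))
  exact (hfderiv.comp (f := fun η => (τ, η)) (by fun_prop) fun η hη => ⟨hτ, hη⟩).congr
    fun η hη => (fderivWithin_apply_one_one hQ hτ hη).symm

theorem hasDerivAt_characteristic
    (hQ : ContDiffOn ℝ 1 (Function.uncurry Q) (Ico0 T ×ˢ Icc (0 : ℝ) 1)) {r c : ℝ}
    (hr : r ∈ Ico0 T) (hr0 : 0 < r) (hrc : r - c ∈ Ioo (0 : ℝ) 1) :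
    HasDerivAt (fun t => Q t (t - c)) (pdTau Q r (r - c) + pdEta Q r (r - c)) r := by
  have hrc' := Ioo_subset_Icc_self hrc
  have hIco : Ico0 T ∈ 𝓝 r := by
    simpa [nhdsWithin_eq_nhds.2 (Ici_mem_nhds hr0)] using Ico0_mem_nhdsWithin_Ici hr
  have hfderiv := (hQ.differentiableOn one_ne_zero (r, r - c) ⟨hr, hrc'⟩).hasFDerivWithinAt
    |>.hasFDerivAt (prod_mem_nhds hIco (Icc_mem_nhds hrc.1 hrc.2))
  rw [← fderivWithin_apply_one_one hQ hr hrc']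
  exact hfderiv.comp_hasDerivAt r ((hasDerivAt_id r).prodMk ((hasDerivAt_id r).sub_const c))

end PartialDerivatives

/-! ### Uniqueness -/

namespace IsRelaxedSol

variable {K : ℝ → ℝ} {ΦF : ℝ} {T : ℝ≥0∞} {Qinit : ℝ → ℝ} {Q Q₁ Q₂ : ℝ → ℝ → ℝ}
  {N N₁ N₂ : ℝ → ℝ} {L : NNReal}

theorem mono {T' : ℝ≥0∞} (h : IsRelaxedSol K ΦF T' Qinit Q N) (hT : T ≤ T') :
    IsRelaxedSol K ΦF T Qinit Q N where
  initReg := h.initReg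
  init0 := h.init0
  init1 := h.init1
  reg := h.reg.mono (prod_mono_left (Ico0_mono hT))
  Ncont := h.Ncont.mono (Ico0_mono hT)
  pde τ hτ := h.pde τ (Ico0_mono hT hτ)
  bc τ hτ := h.bc τ (Ico0_mono hT hτ)
  Ndef τ hτ := h.Ndef τ (Ico0_mono hT hτ)
  init := h.init

theorem pde_Icc (h : IsRelaxedSol K ΦF T Qinit Q N) (hK : Continuous K) {τ η : ℝ}
    (hτ : τ ∈ Ico0 T) (hη : η ∈ Icc (0 : ℝ) 1) :
    pdTau Q τ η + pdEta Q τ η = N τ + K (Q τ η) := by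
  have hrhs : ContinuousOn (fun η => N τ + K (Q τ η)) (Icc 0 1) :=
    continuousOn_const.add (hK.comp_continuousOn
      (h.reg.continuousOn.comp (f := fun η => (τ, η)) (by fun_prop) fun η hη => ⟨hτ, hη⟩))
  exact EqOn.of_subset_closure (h.pde τ hτ) (continuousOn_pdTau_add_pdEta h.reg hτ) hrhs
    Ioo_subset_Icc_self (closure_Ioo zero_ne_one).ge hη

theorem apply_one (h : IsRelaxedSol K ΦF T Qinit Q N) (hK : LipschitzWith L K) {τ : ℝ}
    (hτ : τ ∈ Ico0 T) : Q τ 1 = ΦF := by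
  have hode : ∀ t ∈ Icc 0 τ, HasDerivWithinAt (fun s => Q s 1) (K (Q t 1) - K ΦF) (Ici 0) t := by
    intro t ht
    have ht' := Icc_subset_Ico0 le_rfl hτ ht
    have hone : (1 : ℝ) ∈ Icc (0 : ℝ) 1 := right_mem_Icc.2 zero_le_one
    convert hasDerivWithinAt_pdTau h.reg ht' hone using 1
    linarith [h.pde_Icc hK.continuous ht' hone, h.Ndef t ht']
  have hlip : ∀ _ : ℝ, LipschitzWith L fun x => K x - K ΦF := fun _ => by
    simpa using hK.sub (LipschitzWith.const (K ΦF))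
  refine ODE_solution_unique (g := fun _ => ΦF) hlip
    (fun t ht => (hode t ht).continuousWithinAt.mono Icc_subset_Ici_self)
    (fun t ht => (hode t (Ico_subset_Icc_self ht)).mono (Ici_subset_Ici.2 ht.1))
    continuousOn_const (fun t _ => ?_) ?_ (right_mem_Icc.2 hτ.1)
  · simpa using hasDerivWithinAt_const t (Ici t) ΦF
  · simpa [h.init1] using h.init 1 (by simp)

theorem continuousOn_characteristic (h : IsRelaxedSol K ΦF T Qinit Q N) {a s c : ℝ}
    (ha : 0 ≤ a) (hs : s ∈ Ico0 T) (hca : c ≤ a) (hsc : s - c ≤ 1) :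
    ContinuousOn (fun r => Q r (r - c)) (Icc a s) :=
  h.reg.continuousOn.comp (f := fun r => (r, r - c)) (by fun_prop) fun r hr =>
    ⟨Icc_subset_Ico0 ha hs hr, by linarith [hr.1], by linarith [hr.2]⟩

theorem intervalIntegrable (h : IsRelaxedSol K ΦF T Qinit Q N) {a s : ℝ} (ha : 0 ≤ a)
    (has : a ≤ s) (hs : s ∈ Ico0 T) : IntervalIntegrable N volume a s :=
  (h.Ncont.mono (by simpa only [uIcc_of_le has] using Icc_subset_Ico0 ha hs)).intervalIntegrable

theorem intervalIntegrable_characteristic (h : IsRelaxedSol K ΦF T Qinit Q N) (hK : Continuous K)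
    {a s c : ℝ} (ha : 0 ≤ a) (has : a ≤ s) (hs : s ∈ Ico0 T) (hca : c ≤ a) (hsc : s - c ≤ 1) :
    IntervalIntegrable (fun r => K (Q r (r - c))) volume a s := by
  refine (hK.comp_continuousOn ?_).intervalIntegrable
  simpa only [uIcc_of_le has] using h.continuousOn_characteristic ha hs hca hsc

theorem sub_eq_integral_characteristic (h : IsRelaxedSol K ΦF T Qinit Q N) (hK : Continuous K)
    {a s c : ℝ} (ha : 0 ≤ a) (has : a ≤ s) (hs : s ∈ Ico0 T) (hca : c ≤ a) (hsc : s - c ≤ 1) :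
    Q s (s - c) - Q a (a - c) = (∫ r in a..s, N r) + ∫ r in a..s, K (Q r (r - c)) := by
  have hN := h.intervalIntegrable ha has hs
  have hKQ := h.intervalIntegrable_characteristic hK ha has hs hca hsc
  rw [← intervalIntegral.integral_add hN hKQ]
  refine (intervalIntegral.integral_eq_sub_of_hasDerivAt_of_le has
    (h.continuousOn_characteristic ha hs hca hsc) (fun r hr => ?_) (hN.add hKQ)).symm
  have hrT := Icc_subset_Ico0 ha hs (Ioo_subset_Icc_self hr)
  have hrc : r - c ∈ Ioo (0 : ℝ) 1 := ⟨by linarith [hr.1], by linarith [hr.2]⟩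
  rw [← h.pde_Icc hK hrT (Ioo_subset_Icc_self hrc)]
  exact hasDerivAt_characteristic h.reg hrT (ha.trans_lt hr.1) hrc

theorem abs_sub_sub_integral_le (h₁ : IsRelaxedSol K ΦF T Qinit Q₁ N₁)
    (h₂ : IsRelaxedSol K ΦF T Qinit Q₂ N₂) (hK : LipschitzWith L K) {a s c B : ℝ}
    (ha : 0 ≤ a) (has : a ≤ s) (hs : s ∈ Ico0 T) (hca : c ≤ a) (hsc : s - c ≤ 1)
    (heq : Q₁ a (a - c) = Q₂ a (a - c))
    (hB : ∀ t ∈ Icc a s, ∀ η ∈ Icc (0 : ℝ) 1, |Q₁ t η - Q₂ t η| ≤ B) :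
    |Q₁ s (s - c) - Q₂ s (s - c) - ∫ r in a..s, (N₁ r - N₂ r)| ≤ L * B * (s - a) := by
  have hsub : Q₁ s (s - c) - Q₂ s (s - c) - ∫ r in a..s, (N₁ r - N₂ r)
      = ∫ r in a..s, (K (Q₁ r (r - c)) - K (Q₂ r (r - c))) := by
    rw [intervalIntegral.integral_sub (h₁.intervalIntegrable ha has hs)
        (h₂.intervalIntegrable ha has hs),
      intervalIntegral.integral_sub
        (h₁.intervalIntegrable_characteristic hK.continuous ha has hs hca hsc)
        (h₂.intervalIntegrable_characteristic hK.continuous ha has hs hca hsc)]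
    linarith [h₁.sub_eq_integral_characteristic hK.continuous ha has hs hca hsc,
      h₂.sub_eq_integral_characteristic hK.continuous ha has hs hca hsc]
  have hlip : ∀ r ∈ uIoc a s, ‖K (Q₁ r (r - c)) - K (Q₂ r (r - c))‖ ≤ L * B := by
    intro r hr
    rw [uIoc_of_le has] at hr
    exact (hK.norm_sub_le _ _).trans (mul_le_mul_of_nonneg_left
      (hB r (Ioc_subset_Icc_self hr) _ ⟨by linarith [hr.1], by linarith [hr.2]⟩) L.2)
  rw [hsub, ← abs_of_nonneg (sub_nonneg.2 has)]
  exact intervalIntegral.norm_integral_le_of_norm_le_const hlip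

theorem abs_integral_sub_le (h₁ : IsRelaxedSol K ΦF T Qinit Q₁ N₁)
    (h₂ : IsRelaxedSol K ΦF T Qinit Q₂ N₂) (hK : LipschitzWith L K) {a τ B : ℝ}
    (ha : 0 ≤ a) (haτ : a ≤ τ) (hτ : τ ∈ Ico0 T) (hτa : τ ≤ a + 1)
    (heq : ∀ η ∈ Icc (0 : ℝ) 1, Q₁ a η = Q₂ a η)
    (hB : ∀ t ∈ Icc a τ, ∀ η ∈ Icc (0 : ℝ) 1, |Q₁ t η - Q₂ t η| ≤ B) :
    |∫ r in a..τ, (N₁ r - N₂ r)| ≤ L * B * (τ - a) := by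
  have hchar := h₁.abs_sub_sub_integral_le h₂ hK (c := τ - 1) ha haτ hτ (by linarith)
    (by linarith) (heq _ ⟨by linarith, by linarith⟩) hB
  rwa [sub_sub_cancel, h₁.apply_one hK hτ, h₂.apply_one hK hτ, sub_self, zero_sub, abs_neg]
    at hchar

theorem abs_sub_le_of_eq_at (h₁ : IsRelaxedSol K ΦF T Qinit Q₁ N₁)
    (h₂ : IsRelaxedSol K ΦF T Qinit Q₂ N₂) (hK : LipschitzWith L K) {a τ η B : ℝ}
    (ha : 0 ≤ a) (haτ : a ≤ τ) (hτ : τ ∈ Ico0 T) (hτa : τ ≤ a + 1) (hη : η ∈ Icc (0 : ℝ) 1)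
    (heq : ∀ η ∈ Icc (0 : ℝ) 1, Q₁ a η = Q₂ a η)
    (hB : ∀ t ∈ Icc a τ, ∀ η ∈ Icc (0 : ℝ) 1, |Q₁ t η - Q₂ t η| ≤ B) :
    |Q₁ τ η - Q₂ τ η| ≤ 2 * L * B * (τ - a) := by
  -- The characteristic through `(τ, η)` enters `[a, τ] × [0, 1]` at time `b`.
  let b := max a (τ - η)
  have hab : a ≤ b := le_max_left _ _
  have hbτ : b ≤ τ := max_le haτ (by linarith [hη.1])
  have hbT := Icc_subset_Ico0 ha hτ ⟨hab, hbτ⟩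
  have hb_eq : Q₁ b (b - (τ - η)) = Q₂ b (b - (τ - η)) := by
    rcases le_total (τ - η) a with hle | hle
    · simp only [b, max_eq_left hle]
      exact heq _ ⟨by linarith, by linarith [hη.2]⟩
    · simp only [b, max_eq_right hle, sub_self] at hbT ⊢
      rw [h₁.bc _ hbT, h₂.bc _ hbT]
  have hchar := h₁.abs_sub_sub_integral_le h₂ hK (c := τ - η) (ha.trans hab) hbτ hτ
    (le_max_right _ _) (by linarith [hη.2]) hb_eq
    fun t ht => hB t ⟨hab.trans ht.1, ht.2⟩
  have hint_τ := h₁.abs_integral_sub_le h₂ hK ha haτ hτ hτa heq hB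
  have hint_b := h₁.abs_integral_sub_le h₂ hK ha hab hbT (hbτ.trans hτa) heq
    fun t ht => hB t ⟨ht.1, ht.2.trans hbτ⟩
  have hsplit : ∫ r in b..τ, (N₁ r - N₂ r)
      = (∫ r in a..τ, (N₁ r - N₂ r)) - ∫ r in a..b, (N₁ r - N₂ r) :=
    (intervalIntegral.integral_interval_sub_left
      ((h₁.intervalIntegrable ha haτ hτ).sub (h₂.intervalIntegrable ha haτ hτ))
      ((h₁.intervalIntegrable ha hab hbT).sub (h₂.intervalIntegrable ha hab hbT))).symm
  rw [hsplit, sub_sub_cancel, abs_le] at hchar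
  rw [abs_le] at hint_τ hint_b ⊢
  constructor <;> linarith [hchar.1, hchar.2, hint_τ.1, hint_τ.2, hint_b.1, hint_b.2]

theorem eq_of_le_add_inv (h₁ : IsRelaxedSol K ΦF T Qinit Q₁ N₁)
    (h₂ : IsRelaxedSol K ΦF T Qinit Q₂ N₂) (hK : LipschitzWith L K) {a τ : ℝ}
    (ha : 0 ≤ a) (haτ : a ≤ τ) (hτ : τ ∈ Ico0 T) (hτa : τ ≤ a + (2 * L + 1 : ℝ)⁻¹)
    (heq : ∀ η ∈ Icc (0 : ℝ) 1, Q₁ a η = Q₂ a η) :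
    ∀ η ∈ Icc (0 : ℝ) 1, Q₁ τ η = Q₂ τ η := by
  have hdiff_cont : ContinuousOn (fun p : ℝ × ℝ => |Q₁ p.1 p.2 - Q₂ p.1 p.2|)
      (Icc a τ ×ˢ Icc (0 : ℝ) 1) :=
    ((h₁.reg.continuousOn.sub h₂.reg.continuousOn).mono
      (prod_mono_left (Icc_subset_Ico0 ha hτ))).abs
  obtain ⟨⟨t, x⟩, ⟨ht, hx⟩, hmax⟩ := (isCompact_Icc.prod isCompact_Icc).exists_isMaxOn
    ⟨(a, 0), left_mem_Icc.2 haτ, left_mem_Icc.2 zero_le_one⟩ hdiff_cont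
  set B := |Q₁ t x - Q₂ t x|
  have hB_bound : ∀ s ∈ Icc a τ, ∀ y ∈ Icc (0 : ℝ) 1, |Q₁ s y - Q₂ s y| ≤ B :=
    fun s hs y hy => hmax (a := (s, y)) ⟨hs, hy⟩
  have hta : t - a ≤ (2 * L + 1 : ℝ)⁻¹ := by linarith [ht.2]
  have hinv : (2 * L + 1 : ℝ)⁻¹ ≤ 1 := inv_le_one_of_one_le₀ (by linarith [L.2])
  have hstrip : B ≤ 2 * L * B * (t - a) :=
    h₁.abs_sub_le_of_eq_at h₂ hK ha ht.1 (Icc_subset_Ico0 ha hτ ht) (by linarith) hx heq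
      fun s hs => hB_bound s ⟨hs.1, hs.2.trans ht.2⟩
  have hB_zero : B ≤ 0 := by
    have hL : (0 : ℝ) < 2 * L + 1 := by linarith [L.2]
    have hcontr : B ≤ 2 * L * B * (2 * L + 1 : ℝ)⁻¹ := hstrip.trans
      (mul_le_mul_of_nonneg_left hta (by positivity))
    rw [← div_eq_mul_inv, le_div_iff₀ hL] at hcontr
    linarith
  exact fun η hη => sub_eq_zero.1 (abs_nonpos_iff.1
    ((hB_bound τ (right_mem_Icc.2 haτ) η hη).trans hB_zero))

theorem unique_left (h₁ : IsRelaxedSol K ΦF T Qinit Q₁ N₁)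
    (h₂ : IsRelaxedSol K ΦF T Qinit Q₂ N₂) (hK : LipschitzWith L K) :
    ∀ τ ∈ Ico0 T, ∀ η ∈ Icc (0 : ℝ) 1, Q₁ τ η = Q₂ τ η := by
  have hδ : (0 : ℝ) < (2 * L + 1 : ℝ)⁻¹ := inv_pos.2 (by linarith [L.2])
  have hsteps (n : ℕ) : ∀ τ ∈ Ico0 T, τ ≤ n * (2 * L + 1 : ℝ)⁻¹ →
      ∀ η ∈ Icc (0 : ℝ) 1, Q₁ τ η = Q₂ τ η := by
    induction n with
    | zero =>
      intro τ hτ hτn η hη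
      obtain rfl : τ = 0 := le_antisymm (by simpa using hτn) hτ.1
      rw [h₁.init η hη, h₂.init η hη]
    | succ n ih =>
      intro τ hτ hτn
      rcases le_total τ (n * (2 * L + 1 : ℝ)⁻¹) with hle | hle
      · exact ih τ hτ hle
      · have hn : 0 ≤ n * (2 * L + 1 : ℝ)⁻¹ := by positivity
        push_cast at hτn
        exact h₁.eq_of_le_add_inv h₂ hK hn hle hτ (by linarith)
          (ih _ (Icc_subset_Ico0 hn hτ (left_mem_Icc.2 hle)) le_rfl)
  intro τ hτ
  obtain ⟨n, hn⟩ := exists_nat_ge (τ / (2 * L + 1 : ℝ)⁻¹)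
  exact hsteps n τ hτ ((div_le_iff₀ hδ).1 hn)

theorem unique_right (h₁ : IsRelaxedSol K ΦF T Qinit Q₁ N₁)
    (h₂ : IsRelaxedSol K ΦF T Qinit Q₂ N₂) (hK : LipschitzWith L K) :
    ∀ τ ∈ Ico0 T, N₁ τ = N₂ τ := by
  intro τ hτ
  have hQ := h₁.unique_left h₂ hK τ hτ
  rw [h₁.Ndef τ hτ, h₂.Ndef τ hτ, pdEta, pdEta,
    derivWithin_congr hQ (hQ 1 (right_mem_Icc.2 zero_le_one))]

end IsRelaxedSol

/-! ### Well-posedness -/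

theorem exists_isRelaxedSol_top {K Qinit : ℝ → ℝ} {ΦF : ℝ} {L L' : NNReal}
    (hK : ContDiff ℝ 1 K) (hL : LipschitzWith L K) (hL' : LipschitzWith L' (deriv K))
    (hQ : ContDiffOn ℝ 1 Qinit (Icc 0 1)) (hQ0 : Qinit 0 = 0) (hQ1 : Qinit 1 = ΦF)
    (hcompat : derivWithin Qinit (Icc 0 1) 1 - derivWithin Qinit (Icc 0 1) 0 = K ΦF - K 0) :
    ∃ Q N, IsRelaxedSol K ΦF ⊤ Qinit Q N := by
  obtain ⟨R₀, hR₀, ⟨G, hG⟩, hR₀_eq, hR₀_int⟩ :=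
    exists_bounded_continuous_eqOn_derivWithin_Icc zero_lt_one hQ
  obtain ⟨R, hR⟩ := exists_isMildSlope (fun _ => norm_deriv_le_of_lipschitz hL) hL' hR₀ hG
  refine ⟨_, _, hR.isRelaxedSol hK hR₀ hQ hQ0 hQ1 (fun η hη => ?_) ?_⟩
  · rw [hR₀_int η hη, hQ0, sub_zero]
  · rw [hR₀_eq (right_mem_Icc.2 zero_le_one), hR₀_eq (left_mem_Icc.2 zero_le_one), hcompat]

theorem stmt5_general {K Qinit : ℝ → ℝ} {ΦF : ℝ} {L L' : NNReal} (hK : ContDiff ℝ 1 K)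
    (hL : LipschitzWith L K) (hL' : LipschitzWith L' (deriv K))
    (hQ : ContDiffOn ℝ 1 Qinit (Icc 0 1)) (hQ0 : Qinit 0 = 0) (hQ1 : Qinit 1 = ΦF)
    (hcompat : derivWithin Qinit (Icc 0 1) 1 - derivWithin Qinit (Icc 0 1) 0 = K ΦF - K 0) :
    ∃ Q N, IsRelaxedSol K ΦF ⊤ Qinit Q N ∧
      ∀ T Q' N', IsRelaxedSol K ΦF T Qinit Q' N' →
        (∀ τ ∈ Ico0 T, ∀ η ∈ Icc (0 : ℝ) 1, Q' τ η = Q τ η) ∧ ∀ τ ∈ Ico0 T, N' τ = N τ := by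
  obtain ⟨Q, N, h⟩ := exists_isRelaxedSol_top hK hL hL' hQ hQ0 hQ1 hcompat
  exact ⟨Q, N, h, fun T Q' N' h' =>
    ⟨h'.unique_left (h.mono le_top) hL, h'.unique_right (h.mono le_top) hL⟩⟩

/-- Theorem 3.5: global well-posedness of the relaxed system. -/
theorem stmt5 (ΦF : ℝ) (hΦF : 0 < ΦF) (K : ℝ → ℝ) (hK : KAssump K ΦF)
    (Qinit : ℝ → ℝ) (hA2 : A2 K ΦF Qinit) :
    ∃ (Q : ℝ → ℝ → ℝ) (Ntil : ℝ → ℝ),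
      IsRelaxedSol K ΦF ⊤ Qinit Q Ntil ∧
      ∀ (Q' : ℝ → ℝ → ℝ) (Ntil' : ℝ → ℝ), IsRelaxedSol K ΦF ⊤ Qinit Q' Ntil' →
        (∀ τ : ℝ, 0 ≤ τ → ∀ η ∈ Icc (0 : ℝ) 1, Q' τ η = Q τ η) ∧
        (∀ τ : ℝ, 0 ≤ τ → Ntil' τ = Ntil τ) := by
  obtain ⟨L, hL⟩ := exists_lipschitzWith_of_abs_deriv_le
    (hK.smooth.differentiable two_ne_zero) hK.bdd1
  obtain ⟨L', hL'⟩ := exists_lipschitzWith_of_abs_deriv_le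
    (hK.smooth.differentiable_deriv_two) hK.bdd2
  obtain ⟨Q, N, hsol, hunique⟩ := stmt5_general (hK.smooth.of_le one_le_two) hL hL' hA2.reg
    hA2.init0 hA2.init1 hA2.compat
  refine ⟨Q, N, hsol, fun Q' N' hsol' => ?_⟩
  simpa only [mem_Ico0_top] using hunique ⊤ Q' N' hsol'
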